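/- Let U = (−1, 1) ⊆ ℝ. Then: (a) for every f ∈ 𝒮(U), the function equal to e^{1/(x²−1)}·f(x) on U and to 0 outside U belongs to 𝒮(U) (i.e. x ↦ e^{1/(x²−1)} is tempered on U); (b) there exists f ∈ 𝒮(U) such that the function equal to e^{1/(1−x²)}·f(x) on U and to 0 outside U does not belong to 𝒮(U) (i.e. the pointwise multiplicative inverse x ↦ e^{1/(1−x²)} is not tempered on U). -/

import Mathlib

/-- `f ∈ 𝒮(U)` for `U ⊆ ℝ`: a Schwartz function on `ℝ` flat at `ℝ \ U`. -/
def SchwartzFlatOn (U : Set ℝ) (f : SchwartzMap ℝ ℝ) : Prop :=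
  ∀ z ∉ U, ∀ k : ℕ, iteratedFDeriv ℝ k (⇑f) z = 0

/-!
The function `expNegInvGlue`, equal to `e^{-1/t}` for `t > 0` and to `0` for `t ≤ 0`, is smooth and
flat on `(-∞, 0]`, so `φ = expNegInvGlue ∘ h` is smooth and flat off `U = {h > 0}` for every smooth
`h`; the theorem is about `h x = 1 - x²`. By the Leibniz rule `φ · f` is flat off `U` for every
smooth `f`, and it has compact support since `U` is bounded. Conversely `φ` itself lies in `𝒮(U)`,
but `e^{1/h} φ` is the indicator function of `U`, which is discontinuous as `U` is not clopen.
-/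

open Set Bornology
open scoped ContDiff SchwartzMap

section Flat

variable {E F G : Type*} [NormedAddCommGroup E] [NormedSpace ℝ E] [NormedAddCommGroup F]
  [NormedSpace ℝ F] [NormedAddCommGroup G] [NormedSpace ℝ G]

/-- `f` is flat at `x`: all its derivatives, the zeroth one included, vanish at `x`. This is meant
for functions smooth at `x`, since `iteratedFDeriv` takes the value `0` at missing derivatives. -/
def IsFlatAt (f : E → F) (x : E) : Prop :=
  ∀ k : ℕ, iteratedFDeriv ℝ k f x = 0

namespace IsFlatAt

theorem eq_zero {f : E → F} {x : E} (hf : IsFlatAt f x) : f x = 0 := by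
  simpa using DFunLike.congr_fun (hf 0) 0

theorem of_eqOn_zero {f : E → F} {s : Set E} {x : E} (hf : ContDiffAt ℝ ∞ f x)
    (hs : UniqueDiffOn ℝ s) (hfs : EqOn f 0 s) (hx : x ∈ s) : IsFlatAt f x := fun k => by
  rw [← iteratedFDerivWithin_eq_iteratedFDeriv hs (hf.of_le (mod_cast le_top)) hx,
    iteratedFDerivWithin_congr hfs hx, iteratedFDerivWithin_zero, Pi.zero_apply]

theorem comp {g : F → G} {f : E → F} {x : E} (hflat : IsFlatAt g (f x))
    (hg : ContDiffAt ℝ ∞ g (f x)) (hf : ContDiffAt ℝ ∞ f x) : IsFlatAt (g ∘ f) x := fun k => by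
  have faaDiBruno := iteratedFDeriv_comp hg hf (i := k) (mod_cast le_top)
  rw [faaDiBruno]
  refine Finset.sum_eq_zero fun c _ => ?_
  ext v
  simp [FormalMultilinearSeries.compAlongOrderedFinpartition, ftaylorSeries, hflat c.length]

theorem mul {A : Type*} [NormedRing A] [NormedAlgebra ℝ A] {f g : E → A} {x : E}
    (hflat : IsFlatAt f x) (hf : ContDiff ℝ ∞ f) (hg : ContDiff ℝ ∞ g) :
    IsFlatAt (fun y => f y * g y) x := fun k => by
  have leibniz := norm_iteratedFDeriv_mul_le hf hg x (n := k) (mod_cast le_top)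
  simpa only [hflat _, norm_zero, mul_zero, zero_mul, Finset.sum_const_zero, norm_le_zero_iff]
    using leibniz

end IsFlatAt

end Flat

theorem isFlatAt_expNegInvGlue {t : ℝ} (ht : t ≤ 0) : IsFlatAt expNegInvGlue t :=
  .of_eqOn_zero expNegInvGlue.contDiff.contDiffAt (uniqueDiffOn_Iic 0)
    (fun _ => expNegInvGlue.zero_of_nonpos) ht

theorem expNegInvGlue_of_pos {t : ℝ} (ht : 0 < t) : expNegInvGlue t = Real.exp (-(1 / t)) := by
  rw [expNegInvGlue, if_neg ht.not_ge, one_div]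

theorem exists_schwartzFlatOn_coe_eq {U : Set ℝ} (hU : IsBounded U) {φ : ℝ → ℝ}
    (hφ : ContDiff ℝ ∞ φ) (hflat : ∀ x ∉ U, IsFlatAt φ x) :
    ∃ g : 𝓢(ℝ, ℝ), ⇑g = φ ∧ SchwartzFlatOn U g := by
  have hsupp : HasCompactSupport φ := .intro hU.isCompact_closure fun x hx =>
    (hflat x (notMem_of_notMem_closure hx)).eq_zero
  exact ⟨hsupp.toSchwartzMap hφ, rfl, hflat⟩

theorem not_continuous_of_eq_one_of_eq_zero {X : Type*} [TopologicalSpace X]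
    [PreconnectedSpace X] {U : Set X} (hne : U.Nonempty) (hU : U ≠ univ) {g : X → ℝ}
    (hone : ∀ x ∈ U, g x = 1) (hzero : ∀ x ∉ U, g x = 0) : ¬ Continuous g := fun hg => by
  have eq_preimage_one : U = g ⁻¹' {1} := by
    ext x
    by_cases hx : x ∈ U <;> simp [hx, hone, hzero]
  have eq_preimage_compl_zero : U = g ⁻¹' {0}ᶜ := by
    ext x
    by_cases hx : x ∈ U <;> simp [hx, hone, hzero]
  have hclosed : IsClosed U := eq_preimage_one ▸ isClosed_singleton.preimage hg
  have hopen : IsOpen U := eq_preimage_compl_zero ▸ isOpen_compl_singleton.preimage hg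
  exact hU (IsClopen.eq_univ ⟨hclosed, hopen⟩ hne)

section PositivitySet

variable {h : ℝ → ℝ} {U : Set ℝ}

theorem exists_schwartzFlatOn_exp_neg_mul (hh : ContDiff ℝ ∞ h) (hU : ∀ x, x ∈ U ↔ 0 < h x)
    (hb : IsBounded U) {f : ℝ → ℝ} (hf : ContDiff ℝ ∞ f) :
    ∃ g : 𝓢(ℝ, ℝ), (∀ x ∈ U, g x = Real.exp (-(1 / h x)) * f x) ∧ (∀ x ∉ U, g x = 0) ∧
      SchwartzFlatOn U g := by
  have hφ : ContDiff ℝ ∞ (expNegInvGlue ∘ h) := expNegInvGlue.contDiff.comp hh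
  have hflat (x) (hx : x ∉ U) : IsFlatAt (fun y => (expNegInvGlue ∘ h) y * f y) x :=
    have hφx : IsFlatAt (expNegInvGlue ∘ h) x :=
      (isFlatAt_expNegInvGlue (not_lt.1 (mt (hU x).2 hx))).comp
        expNegInvGlue.contDiff.contDiffAt hh.contDiffAt
    hφx.mul hφ hf
  obtain ⟨g, hg, hgU⟩ := exists_schwartzFlatOn_coe_eq hb (hφ.mul hf) hflat
  refine ⟨g, fun x hx => ?_, fun x hx => IsFlatAt.eq_zero (hgU x hx), hgU⟩
  simp only [hg, Function.comp_apply, expNegInvGlue_of_pos ((hU x).1 hx)]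

theorem exists_schwartzFlatOn_exp_mul_not_continuous (hh : ContDiff ℝ ∞ h)
    (hU : ∀ x, x ∈ U ↔ 0 < h x) (hb : IsBounded U) (hne : U.Nonempty) :
    ∃ f : 𝓢(ℝ, ℝ), SchwartzFlatOn U f ∧ ∀ g : ℝ → ℝ,
      (∀ x ∈ U, g x = Real.exp (1 / h x) * f x) → (∀ x ∉ U, g x = 0) → ¬ Continuous g := by
  obtain ⟨f, hf, -, hfU⟩ := exists_schwartzFlatOn_exp_neg_mul hh hU hb (contDiff_const (c := 1))
  refine ⟨f, hfU, fun g hg => not_continuous_of_eq_one_of_eq_zero hne ?_ fun x hx => ?_⟩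
  · rintro rfl
    exact NoncompactSpace.noncompact_univ (Metric.isCompact_of_isClosed_isBounded isClosed_univ hb)
  · rw [hg x hx, hf x hx, mul_one, ← Real.exp_add, add_neg_cancel, Real.exp_zero]

end PositivitySet

theorem stmt_14_general {h : ℝ → ℝ} {U : Set ℝ} (hh : ContDiff ℝ ∞ h)
    (hU : ∀ x, x ∈ U ↔ 0 < h x) (hb : IsBounded U) (hne : U.Nonempty) :
    (∀ f : ℝ → ℝ, ContDiff ℝ ∞ f →
      ∃ g : 𝓢(ℝ, ℝ), (∀ x ∈ U, g x = Real.exp (-(1 / h x)) * f x) ∧ (∀ x ∉ U, g x = 0) ∧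
        SchwartzFlatOn U g) ∧
    (∃ f : 𝓢(ℝ, ℝ), SchwartzFlatOn U f ∧ ∀ g : ℝ → ℝ,
      (∀ x ∈ U, g x = Real.exp (1 / h x) * f x) → (∀ x ∉ U, g x = 0) → ¬ Continuous g) :=
  ⟨fun _ => exists_schwartzFlatOn_exp_neg_mul hh hU hb,
    exists_schwartzFlatOn_exp_mul_not_continuous hh hU hb hne⟩

theorem mem_Ioo_neg_one_one_iff (x : ℝ) : x ∈ Ioo (-1) 1 ↔ 0 < 1 - x ^ 2 := by
  rw [sub_pos, sq_lt_one_iff_abs_lt_one, abs_lt, mem_Ioo]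

/-- On `U = (-1, 1)`:
(a) `x ↦ e^{1/(x²-1)}` is tempered, i.e. multiplication by it (followed by extension by
zero) preserves `𝒮(U)`;
(b) its pointwise inverse `x ↦ e^{1/(1-x²)}` is not tempered: there is `f ∈ 𝒮(U)` whose
product with it does not extend by zero to an element of `𝒮(U)`. -/
theorem stmt_14 :
    (∀ f : SchwartzMap ℝ ℝ, SchwartzFlatOn (Set.Ioo (-1 : ℝ) 1) f →
      ∃ g : SchwartzMap ℝ ℝ,
        (∀ x ∈ Set.Ioo (-1 : ℝ) 1, g x = Real.exp (1 / (x ^ 2 - 1)) * f x) ∧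
        (∀ x ∉ Set.Ioo (-1 : ℝ) 1, g x = 0) ∧
        SchwartzFlatOn (Set.Ioo (-1 : ℝ) 1) g) ∧
    (∃ f : SchwartzMap ℝ ℝ, SchwartzFlatOn (Set.Ioo (-1 : ℝ) 1) f ∧
      ¬ ∃ g : SchwartzMap ℝ ℝ,
        (∀ x ∈ Set.Ioo (-1 : ℝ) 1, g x = Real.exp (1 / (1 - x ^ 2)) * f x) ∧
        (∀ x ∉ Set.Ioo (-1 : ℝ) 1, g x = 0) ∧
        SchwartzFlatOn (Set.Ioo (-1 : ℝ) 1) g) := by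
  obtain ⟨tempered, f, hf, not_continuous⟩ := stmt_14_general (h := fun x => 1 - x ^ 2)
    (by fun_prop) mem_Ioo_neg_one_one_iff (Metric.isBounded_Ioo _ _) (nonempty_Ioo.2 (by norm_num))
  simp only [← one_div_neg_eq_neg_one_div, neg_sub] at tempered
  exact ⟨fun f _ => tempered f (f.smooth ⊤),
    f, hf, fun ⟨g, hgU, hg, _⟩ => not_continuous g hgU hg g.continuous⟩
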